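/- g^5_3(6) = 10; that is, every Gallai-5-coloring of K_{10} contains a set of 6 vertices spanning edges in at most 3 colors, and there exists a Gallai-5-coloring of K_9 in which every set of 6 vertices spans edges in at least 4 colors. -/

import Mathlib

open Finset

/-- A Gallai coloring: a symmetric edge-coloring of the complete graph on `V`
with no rainbow triangle. -/
def IsGallai {V β : Type*} (c : V → V → β) : Prop :=
  (∀ a b, c a b = c b a) ∧
  ∀ a b d : V, a ≠ b → a ≠ d → b ≠ d →
    ¬(c a b ≠ c a d ∧ c a b ≠ c b d ∧ c a d ≠ c b d)

/-- The set of colors appearing on edges inside the vertex set `S`. -/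
def colorsOn {V β : Type*} [DecidableEq V] [DecidableEq β]
    (c : V → V → β) (S : Finset V) : Finset β :=
  ((S ×ˢ S).filter fun p => p.1 ≠ p.2).image fun p => c p.1 p.2

/-- `gallaiNum k q p` is the smallest positive `n` such that every Gallai-`k`-coloring
of `K_n` contains a set of `p` vertices whose induced edges use at most `q` colors. -/
noncomputable def gallaiNum (k q p : ℕ) : ℕ :=
  sInf {n : ℕ | 0 < n ∧ ∀ c : Fin n → Fin n → Fin k, IsGallai c →
    ∃ S : Finset (Fin n), S.card = p ∧ (colorsOn c S).card ≤ q}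

/-!
Suppose that in a Gallai coloring with five colors no six vertices span at most three colors, so
that every set `T` of three colors has clique number at most five. By Gallai's theorem every set of
vertices can be cut into two parts joined in a single color, or into four parts with only two colors
`i` and `j` between them.

Call a set a module if every outside vertex is joined to it in a single color. If some module is cut
into four parts, then each of the three sets `T ⊇ {i, j}` has clique number at least the sum of its
clique numbers on the parts. The resulting total of at most `15` forces the parts to be small and
leaves room for at most nine vertices altogether.

Otherwise every module is cut monochromatically. Summing the clique numbers over the six sets `T`
containing a color `x` gives a weight that is at most `30` and grows along each cut by an amount
depending on whether the cut has color `x`. Three successive cuts of ten vertices, each applied to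
the larger side of the previous one, exceed the bound for one of the three cut colors.
-/

section Gallai

variable {V W β : Type*} {c : V → V → β}

theorem IsGallai.comp (hG : IsGallai c) {f : W → V} (hf : Function.Injective f) :
    IsGallai fun a b => c (f a) (f b) :=
  ⟨fun _ _ => hG.1 _ _, fun _ _ _ hab had hbd => hG.2 _ _ _ (hf.ne hab) (hf.ne had) (hf.ne hbd)⟩

theorem IsGallai.eq_of_ne_of_ne (hG : IsGallai c) {a b d : V} (had : a ≠ d) (hbd : b ≠ d)
    (h₁ : c a d ≠ c a b) (h₂ : c b d ≠ c a b) : c a d = c b d := by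
  by_contra h
  rcases eq_or_ne a b with rfl | hab
  · exact h rfl
  · exact hG.2 a b d hab had hbd ⟨h₁.symm, h₂.symm, h⟩

theorem IsGallai.exists_second_color (hG : IsGallai c) {a b d : V} (had : a ≠ d) (hbd : b ≠ d) :
    ∃ q, (c a d = q ∨ c b d = q) ∧ (c a d = c a b ∨ c a d = q) ∧ (c b d = c a b ∨ c b d = q) := by
  by_cases h₁ : c a d = c a b
  · exact ⟨c b d, by simp [h₁]⟩
  by_cases h₂ : c b d = c a b
  · exact ⟨c a d, by simp [h₂]⟩
  exact ⟨c a d, by simp [hG.eq_of_ne_of_ne had hbd h₁ h₂]⟩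

/-- The graph on the vertex set `A` formed by the edges with colors other than `i` and `j`.
Vertices outside `A` are kept as isolated points. -/
def offGraph (c : V → V → β) (A : Finset V) (i j : β) : SimpleGraph V :=
  SimpleGraph.fromRel fun a b => a ∈ A ∧ b ∈ A ∧ c a b ≠ i ∧ c a b ≠ j

variable {A : Finset V} {i j : β} {x y : V}

theorem offGraph_adj (hG : IsGallai c) {a b : V} :
    (offGraph c A i j).Adj a b ↔ a ≠ b ∧ a ∈ A ∧ b ∈ A ∧ c a b ≠ i ∧ c a b ≠ j := by
  simp only [offGraph, SimpleGraph.fromRel_adj, hG.1 b a]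
  tauto

theorem not_reachable_of_cross (hG : IsGallai c) {X : Set V}
    (hX : ∀ a ∈ X, ∀ b ∈ A, b ∉ X → c a b = i ∨ c a b = j) (hx : x ∈ X) (hy : y ∉ X) :
    ¬ (offGraph c A i j).Reachable x y := by
  rintro ⟨p⟩
  obtain ⟨d, -, hd₁, hd₂⟩ := p.exists_boundary_dart X hx hy
  obtain ⟨-, -, hA, hi, hj⟩ := (offGraph_adj hG).1 d.adj
  exact (hX _ hd₁ _ hA hd₂).elim hi hj

theorem cross_of_not_reachable (hG : IsGallai c) (hx : x ∈ A) (hy : y ∈ A)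
    (h : ¬ (offGraph c A i j).Reachable x y) : c x y = i ∨ c x y = j := by
  by_contra! hc
  have hxy : x ≠ y := by rintro rfl; exact h .rfl
  exact h ((offGraph_adj hG).2 ⟨hxy, hx, hy, hc⟩).reachable

theorem color_eq_of_reachable (hG : IsGallai c) (hx : x ∈ A) (hy : y ∈ A)
    (h : ¬ (offGraph c A i j).Reachable x y) {x' : V}
    (hxx' : (offGraph c A i j).Reachable x x') : c x' y = c x y := by
  obtain ⟨p⟩ := hxx'
  induction p with
  | nil => rfl
  | @cons a b d hab _ ih =>
    obtain ⟨-, -, hb, hi, hj⟩ := (offGraph_adj hG).1 hab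
    have hby : ¬ (offGraph c A i j).Reachable b y := fun hr => h (hab.reachable.trans hr)
    rw [ih hb hby]
    have hne {t : V} (ht : ¬ (offGraph c A i j).Reachable t y) : t ≠ y := by
      rintro rfl; exact ht .rfl
    refine (hG.eq_of_ne_of_ne (hne h) (hne hby) ?_ ?_).symm
    · rcases cross_of_not_reachable hG hx hy h with e | e <;> rw [e]
      exacts [hi.symm, hj.symm]
    · rcases cross_of_not_reachable hG hb hy hby with e | e <;> rw [e]
      exacts [hi.symm, hj.symm]

theorem color_eq_star (hG : IsGallai c) {v : V} (hv : v ∉ A) (hx : x ∈ A) (hy : y ∈ A)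
    (h : ¬ (offGraph c A i j).Reachable x y) (hvx : c v x = i ∨ c v x = j)
    (hvy : c v y ≠ i ∧ c v y ≠ j) : c x y = c v x := by
  have hyx : y ≠ x := by rintro rfl; exact h .rfl
  have hvx' : v ≠ x := by rintro rfl; exact hv hx
  rw [hG.1 x y]
  refine hG.eq_of_ne_of_ne hyx hvx' ?_ ?_ <;> rw [hG.1 y v]
  · rw [hG.1 y x]
    rcases cross_of_not_reachable hG hx hy h with e | e <;> rw [e]
    exacts [hvy.1.symm, hvy.2.symm]
  · rcases hvx with e | e <;> rw [e]
    exacts [hvy.1.symm, hvy.2.symm]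

theorem star_color_eq (hG : IsGallai c) {v : V} (hv : v ∉ A) (hx : x ∈ A) (hy : y ∈ A)
    (h : ¬ (offGraph c A i j).Reachable x y) (hvx : c v x ≠ i ∧ c v x ≠ j)
    (hvy : c v y ≠ i ∧ c v y ≠ j) : c v x = c v y := by
  have hxv : x ≠ v := by rintro rfl; exact hv hx
  have hyv : y ≠ v := by rintro rfl; exact hv hy
  rw [hG.1 v x, hG.1 v y] at *
  refine hG.eq_of_ne_of_ne hxv hyv ?_ ?_
  all_goals rcases cross_of_not_reachable hG hx hy h with e | e <;> rw [e]
  exacts [hvx.1, hvx.2, hvy.1, hvy.2]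

theorem eq_of_star_colors (hG : IsGallai c) {v : V} (hv : v ∉ A)
    (hx : x ∈ A) (hy : y ∈ A) (hvx : c v x = i) (hvy : c v y = j)
    (h : ∀ z ∈ A, ∃ t ∈ A, ¬ (offGraph c A i j).Reachable z t ∧ c v t ≠ i ∧ c v t ≠ j)
    (h' : ∀ z ∈ A, ∃ t ∈ A, (offGraph c A i j).Reachable z t ∧ c v t ≠ i ∧ c v t ≠ j) :
    i = j := by
  by_cases hxy : (offGraph c A i j).Reachable x y
  · obtain ⟨t, ht, hxt, hvt⟩ := h x hx
    have hyt : ¬ (offGraph c A i j).Reachable y t := fun hr => hxt (hxy.trans hr)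
    calc i = c x t := by rw [color_eq_star hG hv hx ht hxt (.inl hvx) hvt, hvx]
      _ = c y t := (color_eq_of_reachable hG hx ht hxt hxy).symm
      _ = j := by rw [color_eq_star hG hv hy ht hyt (.inr hvy) hvt, hvy]
  · obtain ⟨x', hx', hxx', hvx'⟩ := h' x hx
    obtain ⟨y', hy', hyy', hvy'⟩ := h' y hy
    have hxy' : ¬ (offGraph c A i j).Reachable x y' := fun hr => hxy (hr.trans hyy'.symm)
    have hyx : ¬ (offGraph c A i j).Reachable y x := fun hr => hxy hr.symm
    have hyx' : ¬ (offGraph c A i j).Reachable y x' := fun hr => hyx (hr.trans hxx'.symm)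
    calc i = c x y' := by rw [color_eq_star hG hv hx hy' hxy' (.inl hvx) hvy', hvx]
      _ = c y' x := hG.1 _ _
      _ = c y x := color_eq_of_reachable hG hy hx hyx hyy'
      _ = c x y := hG.1 _ _
      _ = c x' y := (color_eq_of_reachable hG hx hy hxy hxx').symm
      _ = c y x' := hG.1 _ _
      _ = j := by rw [color_eq_star hG hv hy hx' hyx' (.inr hvy) hvx', hvy]

theorem exists_star_colors (hG : IsGallai c) {v : V} (hv : v ∉ A) (hx : x ∈ A) (hy : y ∈ A)
    (hxy : ¬ (offGraph c A i j).Reachable x y)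
    (h : ∀ z ∈ A, ∃ t ∈ A, (offGraph c A i j).Reachable z t ∧ c v t ≠ i ∧ c v t ≠ j) :
    ∃ k l, ∀ z ∈ A, c v z = k ∨ c v z = l := by
  obtain ⟨x', hx', hxx', hvx'⟩ := h x hx
  obtain ⟨y', hy', hyy', hvy'⟩ := h y hy
  have hxy' : ¬ (offGraph c A i j).Reachable x' y' :=
    fun hr => hxy ((hxx'.trans hr).trans hyy'.symm)
  have other (z : V) : ∃ t ∈ A, ¬ (offGraph c A i j).Reachable z t ∧ (c v t ≠ i ∧ c v t ≠ j) ∧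
      c v t = c v x' := by
    by_cases hz : (offGraph c A i j).Reachable z x'
    · exact ⟨y', hy', fun hr => hxy' (hz.symm.trans hr), hvy',
        (star_color_eq hG hv hx' hy' hxy' hvx' hvy').symm⟩
    · exact ⟨x', hx', hz, hvx', rfl⟩
  have third {z : V} (hz : z ∈ A) (hvz : c v z ≠ i ∧ c v z ≠ j) : c v z = c v x' := by
    obtain ⟨t, ht, hzt, hvt, e⟩ := other z
    exact (star_color_eq hG hv hz ht hzt hvz hvt).trans e
  by_cases hi : ∃ u ∈ A, c v u = i
  · obtain ⟨u, hu, hvu⟩ := hi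
    refine ⟨i, c v x', fun z hz => ?_⟩
    by_contra! hne
    have hvz : c v z = j := by
      by_contra hj
      exact hne.2 (third hz ⟨hne.1, hj⟩)
    have hij : i = j := eq_of_star_colors hG hv hu hz hvu hvz
      (fun z _ => (other z).imp fun t ht => ⟨ht.1, ht.2.1, ht.2.2.1⟩) h
    exact hne.1 (hvz.trans hij.symm)
  · refine ⟨j, c v x', fun z hz => ?_⟩
    by_contra! hne
    exact hne.2 (third hz ⟨fun e => hi ⟨z, hz, e⟩, hne.1⟩)

/-- A form of Gallai's theorem: some two colors carry all edges between the components formed by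
the remaining colors, and there are at least two such components. -/
theorem exists_not_reachable (hG : IsGallai c) (A : Finset V) (hA : A.Nontrivial) :
    ∃ i j, ∃ x ∈ A, ∃ y ∈ A, ¬ (offGraph c A i j).Reachable x y := by
  classical
  induction A using Finset.induction_on with
  | empty => simp at hA
  | insert v A hv ih =>
    have isolated {k l : β} {u : V} (hu : u ∈ A) (h : ∀ z ∈ A, c v z = k ∨ c v z = l) :
        ∃ i j, ∃ x ∈ insert v A, ∃ y ∈ insert v A,
          ¬ (offGraph c (insert v A) i j).Reachable x y := by
      refine ⟨k, l, v, mem_insert_self v A, u, mem_insert_of_mem hu,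
        not_reachable_of_cross hG (X := {v}) ?_ rfl (by rintro rfl; exact hv hu)⟩
      rintro a rfl b hb hba
      exact h b (mem_of_mem_insert_of_ne hb hba)
    rcases A.eq_empty_or_nonempty with rfl | hne
    · simp at hA
    rcases hne.exists_eq_singleton_or_nontrivial with ⟨u, rfl⟩ | hA'
    · exact isolated (k := c v u) (l := c v u) (mem_singleton_self u) (by simp)
    obtain ⟨i, j, x, hx, y, hy, hxy⟩ := ih hA'
    by_cases h : ∀ z ∈ A, ∃ t ∈ A, (offGraph c A i j).Reachable z t ∧ c v t ≠ i ∧ c v t ≠ j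
    · obtain ⟨k, l, hkl⟩ := exists_star_colors hG hv hx hy hxy h
      exact isolated hx hkl
    push Not at h
    obtain ⟨z, hz, hvz⟩ := h
    refine ⟨i, j, z, mem_insert_of_mem hz, v, mem_insert_self v A, not_reachable_of_cross hG
      (X := {t | t ∈ A ∧ (offGraph c A i j).Reachable z t}) ?_ ⟨hz, .rfl⟩ fun hv' => hv hv'.1⟩
    rintro a ⟨ha, hza⟩ b hb hb'
    rcases mem_insert.1 hb with rfl | hbA
    · rw [hG.1 a b]
      exact or_iff_not_imp_left.2 (hvz a ha hza)
    · exact cross_of_not_reachable hG ha hbA fun hab => hb' ⟨hbA, hza.trans hab⟩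

/-- All edges between the disjoint sets `X` and `Y` have color `x`. -/
def MonoJoined (c : V → V → β) (x : β) (X Y : Finset V) : Prop :=
  Disjoint X Y ∧ ∀ a ∈ X, ∀ b ∈ Y, c a b = x

/-- `A` splits into two nonempty parts joined in a single color. -/
def HasMonoCut (c : V → V → β) (A : Finset V) : Prop :=
  ∃ x, ∃ X Y : Finset V, X.Nonempty ∧ Y.Nonempty ∧ MonoJoined c x X Y ∧ ∀ a, a ∈ A ↔ a ∈ X ∨ a ∈ Y

/-- The labelling `f` splits `A` into four nonempty parts such that the edges between different
parts have only the two colors `i` and `j`. -/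
def IsFourPartition (c : V → V → β) (A : Finset V) (i j : β) (f : V → Fin 4) : Prop :=
  i ≠ j ∧ Set.SurjOn f A Set.univ ∧ ∀ a ∈ A, ∀ b ∈ A, f a ≠ f b → c a b = i ∨ c a b = j

theorem MonoJoined.symm (hG : IsGallai c) {X Y : Finset V} {k : β} (h : MonoJoined c k X Y) :
    MonoJoined c k Y X :=
  ⟨h.1.symm, fun b hb a ha => (hG.1 b a).trans (h.2 a ha b hb)⟩

theorem hasMonoCut_of_cross {k : β} {P : V → Prop} (hx : x ∈ A) (hPx : P x) (hy : y ∈ A)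
    (hPy : ¬ P y) (h : ∀ a ∈ A, P a → ∀ b ∈ A, ¬ P b → c a b = k) : HasMonoCut c A := by
  classical
  refine ⟨k, A.filter P, A.filter (¬ P ·), ⟨x, by simp [hx, hPx]⟩, ⟨y, by simp [hy, hPy]⟩,
    ⟨disjoint_filter_filter_not A A P, ?_⟩, fun a => by simp only [mem_filter]; tauto⟩
  intro a ha b hb
  rw [mem_filter] at ha hb
  exact h a ha.1 ha.2 b hb.1 hb.2

theorem hasMonoCut_of_reachable (hG : IsGallai c) {z : V} (hx : x ∈ A) (hy : y ∈ A) (hz : z ∈ A)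
    (hxy : ¬ (offGraph c A i j).Reachable x y) (hxz : ¬ (offGraph c A i j).Reachable x z)
    (h : c x y = c x z)
    (hcover : ∀ w ∈ A, (offGraph c A i j).Reachable x w ∨ (offGraph c A i j).Reachable y w ∨
      (offGraph c A i j).Reachable z w) : HasMonoCut c A := by
  have key {u w a : V} (hu : u ∈ A) (hw : w ∈ A) (huw : ¬ (offGraph c A i j).Reachable x u)
      (hr : (offGraph c A i j).Reachable u w) (hxa : (offGraph c A i j).Reachable x a) :
      c a w = c x u := by
    have hxw : ¬ (offGraph c A i j).Reachable x w := fun hxw => huw (hxw.trans hr.symm)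
    calc c a w = c x w := color_eq_of_reachable hG hx hw hxw hxa
      _ = c w x := hG.1 _ _
      _ = c u x := color_eq_of_reachable hG hu hx (fun hux => huw hux.symm) hr
      _ = c x u := hG.1 _ _
  refine hasMonoCut_of_cross (k := c x y) hx .rfl hy hxy fun a _ hxa w hw hxw => ?_
  rcases hcover w hw with hr | hr | hr
  exacts [absurd hr hxw, key hy hw hxy hr hxa, (key hz hw hxz hr hxa).trans h.symm]

theorem exists_isFourPartition (hG : IsGallai c) (hij : i ≠ j) {z w : V}
    (hx : x ∈ A) (hy : y ∈ A) (hz : z ∈ A) (hw : w ∈ A)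
    (hxy : ¬ (offGraph c A i j).Reachable x y) (hxz : ¬ (offGraph c A i j).Reachable x z)
    (hyz : ¬ (offGraph c A i j).Reachable y z) (hxw : ¬ (offGraph c A i j).Reachable x w)
    (hyw : ¬ (offGraph c A i j).Reachable y w) (hzw : ¬ (offGraph c A i j).Reachable z w) :
    ∃ f, IsFourPartition c A i j f := by
  classical
  set R := (offGraph c A i j).Reachable
  let f (t : V) : Fin 4 := if R x t then 0 else if R y t then 1 else if R z t then 2 else 3
  have hf {a b : V} (hab : R a b) : f a = f b := by
    have hiff (s : V) : R s a ↔ R s b := ⟨(·.trans hab), (·.trans hab.symm)⟩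
    simp only [f, hiff]
  refine ⟨f, hij, ?_, fun a ha b hb hne =>
    cross_of_not_reachable hG ha hb fun hr => hne (hf hr)⟩
  intro m _
  have hrefl (s : V) : R s s := .rfl
  fin_cases m
  exacts [⟨x, hx, by simp [f, hrefl]⟩, ⟨y, hy, by simp [f, hrefl, hxy]⟩,
    ⟨z, hz, by simp [f, hrefl, hxz, hyz]⟩, ⟨w, hw, by simp [f, hxw, hyw, hzw]⟩]

theorem hasMonoCut_or_isFourPartition (hG : IsGallai c) (hA : A.Nontrivial) :
    HasMonoCut c A ∨ ∃ i j f, IsFourPartition c A i j f := by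
  obtain ⟨i, j, x, hx, y, hy, hxy⟩ := exists_not_reachable hG A hA
  set R := (offGraph c A i j).Reachable
  by_cases h₂ : ∀ z ∈ A, R x z ∨ R y z
  · exact .inl (hasMonoCut_of_reachable hG hx hy hy hxy hxy rfl fun w hw =>
      (h₂ w hw).imp_right .inl)
  push Not at h₂
  obtain ⟨z, hz, hxz, hyz⟩ := h₂
  by_cases h₃ : ∀ w ∈ A, R x w ∨ R y w ∨ R z w
  · left
    have hyx : ¬ R y x := fun hr => hxy hr.symm
    have hzx : ¬ R z x := fun hr => hxz hr.symm
    have hzy : ¬ R z y := fun hr => hyz hr.symm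
    have two_of_three : c x y = c x z ∨ c y x = c y z ∨ c z x = c z y := by
      rw [hG.1 y x, hG.1 z x, hG.1 z y]
      have := cross_of_not_reachable hG hx hy hxy
      have := cross_of_not_reachable hG hx hz hxz
      have := cross_of_not_reachable hG hy hz hyz
      grind
    rcases two_of_three with e | e | e
    · exact hasMonoCut_of_reachable hG hx hy hz hxy hxz e h₃
    · exact hasMonoCut_of_reachable hG hy hx hz hyx hyz e fun w hw => by have := h₃ w hw; tauto
    · exact hasMonoCut_of_reachable hG hz hx hy hzx hzy e fun w hw => by have := h₃ w hw; tauto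
  push Not at h₃
  obtain ⟨w, hw, hxw, hyw, hzw⟩ := h₃
  rcases eq_or_ne i j with rfl | hij
  · exact .inl (hasMonoCut_of_cross hx .rfl hy hxy fun a ha hxa b hb hxb =>
      or_self_iff.1 (cross_of_not_reachable hG ha hb fun hr => hxb (hxa.trans hr)))
  · exact .inr ⟨i, j, exists_isFourPartition hG hij hx hy hz hw hxy hxz hyz hxw hyw hzw⟩

/-- Vertices of a module are indistinguishable from outside: each outside vertex is joined to all
of `A` in a single color. -/
def IsColorModule (c : V → V → β) (A : Finset V) : Prop :=
  ∀ z ∉ A, ∀ a ∈ A, ∀ b ∈ A, c z a = c z b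

theorem IsColorModule.left_of_joined (hG : IsGallai c) {X Y : Finset V} {k : β}
    (hA : IsColorModule c A) (h : MonoJoined c k X Y) (hXY : ∀ a, a ∈ A ↔ a ∈ X ∨ a ∈ Y) :
    IsColorModule c X := by
  intro z hz a ha b hb
  by_cases hzY : z ∈ Y
  · rw [hG.1 z a, hG.1 z b, h.2 a ha z hzY, h.2 b hb z hzY]
  · exact hA z (by simp [hXY, hz, hzY]) a ((hXY a).2 (.inl ha)) b ((hXY b).2 (.inl hb))

/-- No module has a four-part splitting in two colors, so by `hasMonoCut_or_isFourPartition` all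
nontrivial modules can be cut monochromatically. -/
def Decomposable (c : V → V → β) : Prop :=
  ∀ A, IsColorModule c A → ∀ i j f, ¬ IsFourPartition c A i j f

theorem Decomposable.exists_joined [DecidableEq V] (hG : IsGallai c) (hc : Decomposable c)
    (hA : IsColorModule c A) (hcard : 2 ≤ #A) :
    ∃ k, ∃ X Y, IsColorModule c X ∧ IsColorModule c Y ∧ MonoJoined c k X Y ∧ X ∪ Y = A ∧
      0 < #X ∧ #X ≤ #Y ∧ #X + #Y = #A := by
  obtain ⟨k, X, Y, hX, hY, hk, hXY⟩ :=
    (hasMonoCut_or_isFourPartition hG (one_lt_card_iff_nontrivial.1 hcard)).resolve_right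
      fun ⟨i, j, f, hf⟩ => hc A hA i j f hf
  have hmX := hA.left_of_joined hG hk hXY
  have hmY := hA.left_of_joined hG (hk.symm hG) fun a => (hXY a).trans or_comm
  have hun : X ∪ Y = A := by ext a; simp [hXY]
  have hsum : #X + #Y = #A := by rw [← hun, card_union_of_disjoint hk.1]
  rcases le_total (#X) (#Y) with hle | hle
  · exact ⟨k, X, Y, hmX, hmY, hk, hun, hX.card_pos, hle, hsum⟩
  · exact ⟨k, Y, X, hmY, hmX, hk.symm hG, (union_comm Y X).trans hun, hY.card_pos, hle, by omega⟩

end Gallai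

section CliqueNumber

variable {V W β : Type*} [DecidableEq V] [DecidableEq β] {c : V → V → β} {S A B : Finset V}
  {T : Finset β}

theorem colorsOn_subset_iff : colorsOn c S ⊆ T ↔ ∀ a ∈ S, ∀ b ∈ S, a ≠ b → c a b ∈ T := by
  simp only [colorsOn, image_subset_iff, mem_filter, mem_product, Prod.forall, and_imp]
  tauto

theorem colorsOn_mono (h : A ⊆ B) : colorsOn c A ⊆ colorsOn c B :=
  colorsOn_subset_iff.2 fun _ ha _ hb hab =>
    colorsOn_subset_iff.1 Subset.rfl _ (h ha) _ (h hb) hab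

theorem colorsOn_comp [DecidableEq W] (f : W ↪ V) (S : Finset W) :
    colorsOn (fun a b => c (f a) (f b)) S = colorsOn c (S.map f) := by
  ext k
  simpa [colorsOn] using exists_comm

/-- The largest size of a subset of `A` all of whose edges have colors in `T`. -/
def colorCliqueNum (c : V → V → β) (T : Finset β) (A : Finset V) : ℕ :=
  (A.powerset.filter (colorsOn c · ⊆ T)).sup card

theorem card_le_colorCliqueNum (hSA : S ⊆ A) (hS : colorsOn c S ⊆ T) :
    #S ≤ colorCliqueNum c T A :=
  le_sup (f := card) (mem_filter.2 ⟨mem_powerset.2 hSA, hS⟩)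

theorem exists_card_eq_colorCliqueNum (c : V → V → β) (T : Finset β) (A : Finset V) :
    ∃ S ⊆ A, colorsOn c S ⊆ T ∧ #S = colorCliqueNum c T A := by
  have hne : (A.powerset.filter (colorsOn c · ⊆ T)).Nonempty := ⟨∅, by simp [colorsOn]⟩
  obtain ⟨S, hS, e⟩ := exists_mem_eq_sup _ hne card
  rw [mem_filter, mem_powerset] at hS
  exact ⟨S, hS.1, hS.2, e.symm⟩

theorem colorCliqueNum_mono (h : A ⊆ B) : colorCliqueNum c T A ≤ colorCliqueNum c T B := by
  obtain ⟨S, hSA, hS, e⟩ := exists_card_eq_colorCliqueNum c T A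
  exact e ▸ card_le_colorCliqueNum (hSA.trans h) hS

theorem one_le_colorCliqueNum (hA : A.Nonempty) : 1 ≤ colorCliqueNum c T A := by
  obtain ⟨a, ha⟩ := hA
  exact card_le_colorCliqueNum (S := {a}) (by simpa) (by simp [colorsOn_subset_iff])

theorem two_le_colorCliqueNum (hG : IsGallai c) {a b : V} (ha : a ∈ A) (hb : b ∈ A) (hab : a ≠ b)
    (h : c a b ∈ T) : 2 ≤ colorCliqueNum c T A := by
  rw [← card_pair hab]
  refine card_le_colorCliqueNum (by simp [insert_subset_iff, *]) (colorsOn_subset_iff.2 ?_)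
  simp [hG.1 b a, h]

theorem three_le_colorCliqueNum (hG : IsGallai c) {a b d : V} (ha : a ∈ A) (hb : b ∈ A)
    (hd : d ∈ A) (hab : a ≠ b) (had : a ≠ d) (hbd : b ≠ d) (h₁ : c a b ∈ T) (h₂ : c a d ∈ T)
    (h₃ : c b d ∈ T) : 3 ≤ colorCliqueNum c T A := by
  rw [← card_eq_three.2 ⟨a, b, d, hab, had, hbd, rfl⟩]
  refine card_le_colorCliqueNum (by simp [insert_subset_iff, *]) (colorsOn_subset_iff.2 ?_)
  simp [hG.1 b a, hG.1 d a, hG.1 d b, h₁, h₂, h₃]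

theorem sum_colorCliqueNum_fibre_le {ι : Type*} [Fintype ι] [DecidableEq ι] (f : V → ι)
    (h : ∀ a ∈ A, ∀ b ∈ A, f a ≠ f b → c a b ∈ T) :
    ∑ m, colorCliqueNum c T {a ∈ A | f a = m} ≤ colorCliqueNum c T A := by
  choose S hSA hST hScard using fun m => exists_card_eq_colorCliqueNum c T {a ∈ A | f a = m}
  have hmem {m : ι} {a : V} (ha : a ∈ S m) : a ∈ A ∧ f a = m := mem_filter.1 (hSA m ha)
  have hdisj : ((univ : Finset ι) : Set ι).PairwiseDisjoint S := fun m _ n _ hmn =>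
    disjoint_left.2 fun a ham han => hmn ((hmem ham).2.symm.trans (hmem han).2)
  calc ∑ m, colorCliqueNum c T {a ∈ A | f a = m} = ∑ m, #(S m) := by simp only [hScard]
    _ = #(univ.biUnion S) := (card_biUnion hdisj).symm
    _ ≤ colorCliqueNum c T A := card_le_colorCliqueNum ?_ (colorsOn_subset_iff.2 ?_)
  · exact biUnion_subset.2 fun m _ a ha => (hmem ha).1
  · simp only [mem_biUnion, mem_univ, true_and]
    rintro a ⟨m, ha⟩ b ⟨n, hb⟩ hab
    rcases eq_or_ne m n with rfl | hmn
    · exact colorsOn_subset_iff.1 (hST m) a ha b hb hab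
    · refine h a (hmem ha).1 b (hmem hb).1 ?_
      rwa [(hmem ha).2, (hmem hb).2]

theorem colorCliqueNum_add_le (hG : IsGallai c) (hdisj : Disjoint A B)
    (h : ∀ a ∈ A, ∀ b ∈ B, c a b ∈ T) :
    colorCliqueNum c T A + colorCliqueNum c T B ≤ colorCliqueNum c T (A ∪ B) := by
  obtain ⟨S, hSA, hST, eS⟩ := exists_card_eq_colorCliqueNum c T A
  obtain ⟨R, hRB, hRT, eR⟩ := exists_card_eq_colorCliqueNum c T B
  rw [← eS, ← eR, ← card_union_of_disjoint (disjoint_of_subset_left hSA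
    (disjoint_of_subset_right hRB hdisj))]
  refine card_le_colorCliqueNum (union_subset_union hSA hRB) (colorsOn_subset_iff.2 ?_)
  intro a ha b hb hab
  rcases mem_union.1 ha with ha | ha <;> rcases mem_union.1 hb with hb | hb
  · exact colorsOn_subset_iff.1 hST a ha b hb hab
  · exact h a (hSA ha) b (hRB hb)
  · exact hG.1 a b ▸ h b (hSA hb) a (hRB ha)
  · exact colorsOn_subset_iff.1 hRT a ha b hb hab

end CliqueNumber

section Weight

variable {V β : Type*} [DecidableEq V] [Fintype β] [DecidableEq β] {c : V → V → β}
  {A B : Finset V} {S : Finset β}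

/-- The sets of three colors that contain `S`. -/
def triples (S : Finset β) : Finset (Finset β) :=
  {T | S ⊆ T ∧ #T = 3}

theorem mem_triples {T : Finset β} : T ∈ triples S ↔ S ⊆ T ∧ #T = 3 := by
  simp [triples]

theorem triples_insert (p : β) (S : Finset β) :
    triples (insert p S) = {T ∈ triples S | p ∈ T} := by
  ext T
  simp only [mem_triples, mem_filter, insert_subset_iff]
  tauto

/-- The clique numbers of `A` summed over all sets of three colors containing `S`. If every three
colors have clique number at most `m` then this is at most `m * #(triples S)`. -/
def weight (c : V → V → β) (S : Finset β) (A : Finset V) : ℕ :=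
  ∑ T ∈ triples S, colorCliqueNum c T A

theorem weight_insert_add_weight_le (hG : IsGallai c) {y : β} (h : MonoJoined c y A B) :
    weight c (insert y S) A + weight c S B ≤ weight c S (A ∪ B) := by
  rw [weight, weight, weight, triples_insert, sum_filter, ← sum_add_distrib]
  refine sum_le_sum fun T _ => ?_
  split_ifs with hy
  · exact colorCliqueNum_add_le hG h.1 fun a ha b hb => by rwa [h.2 a ha b hb]
  · exact (zero_add _).trans_le (colorCliqueNum_mono subset_union_right)

theorem card_triples_le_weight (hA : A.Nonempty) : #(triples S) ≤ weight c S A := by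
  rw [weight, card_eq_sum_ones]
  exact sum_le_sum fun T _ => one_le_colorCliqueNum hA

theorem exists_card_triples_add_le_weight (hG : IsGallai c) (hA : 2 ≤ #A) :
    ∃ p, #(triples S) + #(triples (insert p S)) ≤ weight c S A := by
  obtain ⟨a, ha, b, hb, hab⟩ := one_lt_card.1 hA
  refine ⟨c a b, ?_⟩
  rw [weight, triples_insert, card_eq_sum_ones, card_filter, ← sum_add_distrib]
  refine sum_le_sum fun T _ => ?_
  split_ifs with h
  · exact two_le_colorCliqueNum hG ha hb hab h
  · exact one_le_colorCliqueNum ⟨a, ha⟩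

theorem exists_card_triples_add_add_le_weight (hG : IsGallai c) (hA : 3 ≤ #A) :
    ∃ p q, #(triples S) + #(triples (insert p S)) + #(triples (insert q S)) ≤ weight c S A := by
  obtain ⟨a, b, d, ha, hb, hd, hab, had, hbd⟩ := two_lt_card_iff.1 hA
  obtain ⟨q, hq, hadq, hbdq⟩ := hG.exists_second_color had hbd
  refine ⟨c a b, q, ?_⟩
  rw [weight, triples_insert, triples_insert, card_eq_sum_ones, card_filter, card_filter,
    ← sum_add_distrib, ← sum_add_distrib]
  refine sum_le_sum fun T _ => ?_
  split_ifs with hpT hqT hqT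
  · refine three_le_colorCliqueNum hG ha hb hd hab had hbd hpT ?_ ?_
    · rcases hadq with e | e <;> rwa [e]
    · rcases hbdq with e | e <;> rwa [e]
  · exact two_le_colorCliqueNum hG ha hb hab hpT
  · rcases hq with rfl | rfl
    exacts [two_le_colorCliqueNum hG ha hd had hqT, two_le_colorCliqueNum hG hb hd hbd hqT]
  · exact one_le_colorCliqueNum ⟨a, ha⟩

end Weight

section FiveColors

variable {V : Type*} {c : V → V → Fin 5} {A : Finset V} {S : Finset (Fin 5)}

theorem card_triples_singleton : ∀ x : Fin 5, #(triples {x}) = 6 := by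
  decide +kernel

theorem three_le_card_triples : ∀ S : Finset (Fin 5), #S ≤ 2 → 3 ≤ #(triples S) := by
  decide +kernel

theorem card_triples_pair : ∀ i j : Fin 5, i ≠ j → #(triples {i, j}) = 3 := by
  decide +kernel

theorem card_triples_pos (hS : #S ≤ 3) : 0 < #(triples S) := by
  obtain ⟨T, hST, hT⟩ := exists_superset_card_eq hS (by simp)
  exact card_pos.2 ⟨T, mem_triples.2 ⟨hST, hT⟩⟩

theorem card_triples_insert_pos (p : Fin 5) (hS : #S ≤ 2) : 0 < #(triples (insert p S)) :=
  card_triples_pos ((card_insert_le p S).trans (by omega))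

theorem IsGallai.exists_triple (hG : IsGallai c) (hS : #S ≤ 2) {a b d : V} (had : a ≠ d)
    (hbd : b ≠ d) (h : c a b ∈ S ∨ c a d ∈ S ∨ c b d ∈ S) :
    ∃ T ∈ triples S, c a b ∈ T ∧ c a d ∈ T ∧ c b d ∈ T := by
  obtain ⟨q, hab, hadq, hbdq⟩ :
      ∃ q, c a b ∈ insert q S ∧ c a d ∈ insert q S ∧ c b d ∈ insert q S := by
    simp only [mem_insert]
    by_cases hab : c a b ∈ S
    · obtain ⟨q, -, h₁, h₂⟩ := hG.exists_second_color had hbd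
      exact ⟨q, .inr hab, by grind, by grind⟩
    · have := hG.eq_of_ne_of_ne had hbd
      exact ⟨c a b, by grind⟩
  obtain ⟨T, hT⟩ := card_pos.1 (card_triples_insert_pos q hS)
  rw [mem_triples] at hT
  exact ⟨T, mem_triples.2 ⟨(subset_insert q S).trans hT.1, hT.2⟩, hT.1 hab, hT.1 hadq, hT.1 hbdq⟩

variable [DecidableEq V]

theorem three_le_weight (hS : #S ≤ 2) (hA : 1 ≤ #A) : 3 ≤ weight c S A :=
  (three_le_card_triples S hS).trans (card_triples_le_weight (card_pos.1 hA))

theorem four_le_weight (hG : IsGallai c) (hS : #S ≤ 2) (hA : 2 ≤ #A) : 4 ≤ weight c S A := by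
  obtain ⟨p, hp⟩ := exists_card_triples_add_le_weight (S := S) hG hA
  have := three_le_card_triples S hS
  have := card_triples_insert_pos p hS
  omega

theorem five_le_weight (hG : IsGallai c) (hS : #S ≤ 2) (hA : 3 ≤ #A) : 5 ≤ weight c S A := by
  obtain ⟨p, q, hpq⟩ := exists_card_triples_add_add_le_weight (S := S) hG hA
  have := three_le_card_triples S hS
  have := card_triples_insert_pos p hS
  have := card_triples_insert_pos q hS
  omega

theorem exists_triple_three_le (hG : IsGallai c) (hS : #S ≤ 2) (hA : 3 ≤ #A) {a b : V} (ha : a ∈ A)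
    (hb : b ∈ A) (hab : a ≠ b) (h : c a b ∈ S) :
    ∃ T ∈ triples S, 3 ≤ colorCliqueNum c T A := by
  obtain ⟨d, hd, hdab⟩ := exists_mem_notMem_of_card_lt_card (card_le_two.trans_lt hA)
  simp only [mem_insert, mem_singleton, not_or] at hdab
  obtain ⟨T, hT, habT, hadT, hbdT⟩ :=
    hG.exists_triple hS (Ne.symm hdab.1) (Ne.symm hdab.2) (.inl h)
  exact ⟨T, hT, three_le_colorCliqueNum hG ha hb hd hab (Ne.symm hdab.1) (Ne.symm hdab.2)
    habT hadT hbdT⟩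

end FiveColors

section FourPartition

variable {V : Type*} {c : V → V → Fin 5} {A : Finset V} {i j : Fin 5} {f : V → Fin 4}

theorem IsFourPartition.one_le_card (hf : IsFourPartition c A i j f) (m : Fin 4) :
    1 ≤ #{a ∈ A | f a = m} := by
  obtain ⟨a, ha, rfl⟩ := hf.2.1 (Set.mem_univ m)
  exact card_pos.2 ⟨a, by simpa using ha⟩

variable [DecidableEq V] [Fintype V]

theorem IsFourPartition.sum_add_le (hG : IsGallai c)
    (hcap : ∀ T, #T = 3 → colorCliqueNum c T univ ≤ 5) (hA : IsColorModule c A)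
    (hf : IsFourPartition c A i j f) {T : Finset (Fin 5)} (hT : T ∈ triples {i, j}) {a : V}
    (ha : a ∈ A) {U : Finset V} (hU : ∀ u ∈ U, u ∉ A ∧ c u a ∈ T) :
    ∑ m, colorCliqueNum c T {a ∈ A | f a = m} + colorCliqueNum c T U ≤ 5 := by
  simp only [mem_triples, insert_subset_iff, singleton_subset_iff] at hT
  have hdisj : Disjoint A U := disjoint_right.2 fun u hu => (hU u hu).1
  have hcross : ∀ b ∈ A, ∀ u ∈ U, c b u ∈ T := by
    intro b hb u hu
    rw [hG.1 b u, hA u (hU u hu).1 b hb a ha]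
    exact (hU u hu).2
  calc ∑ m, colorCliqueNum c T {a ∈ A | f a = m} + colorCliqueNum c T U
    _ ≤ colorCliqueNum c T A + colorCliqueNum c T U := by
      refine Nat.add_le_add_right (sum_colorCliqueNum_fibre_le f fun a ha b hb hab => ?_) _
      rcases hf.2.2 a ha b hb hab with e | e <;> rw [e]
      exacts [hT.1.1, hT.1.2]
    _ ≤ colorCliqueNum c T (A ∪ U) := colorCliqueNum_add_le hG hdisj hcross
    _ ≤ colorCliqueNum c T univ := colorCliqueNum_mono (subset_univ _)
    _ ≤ 5 := hcap T hT.2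

theorem IsFourPartition.part_add_le (hG : IsGallai c)
    (hcap : ∀ T, #T = 3 → colorCliqueNum c T univ ≤ 5) (hA : IsColorModule c A)
    (hf : IsFourPartition c A i j f) {T : Finset (Fin 5)} (hT : T ∈ triples {i, j}) {a : V}
    (ha : a ∈ A) {U : Finset V} (hU : ∀ u ∈ U, u ∉ A ∧ c u a ∈ T) (m : Fin 4) :
    colorCliqueNum c T {a ∈ A | f a = m} + colorCliqueNum c T U ≤ 2 := by
  have hsum := hf.sum_add_le hG hcap hA hT ha hU
  have hone : 3 ≤ ∑ n ∈ univ.erase m, colorCliqueNum c T {a ∈ A | f a = n} := by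
    refine le_trans ?_ (card_nsmul_le_sum (univ.erase m) _ 1 fun n _ =>
      one_le_colorCliqueNum (card_pos.1 (hf.one_le_card n)))
    simp
  rw [← add_sum_erase univ _ (mem_univ m)] at hsum
  omega

theorem IsFourPartition.notMem_of_outside_pair (hG : IsGallai c)
    (hcap : ∀ T, #T = 3 → colorCliqueNum c T univ ≤ 5) (hA : IsColorModule c A)
    (hf : IsFourPartition c A i j f) {u v a : V} (hu : u ∉ A) (hv : v ∉ A) (huv : u ≠ v)
    (ha : a ∈ A) :
    c u v ∉ ({i, j} : Finset (Fin 5)) ∧ c u a ∉ ({i, j} : Finset (Fin 5)) := by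
  by_contra! h
  have hua : u ≠ a := by rintro rfl; exact hu ha
  have hva : v ≠ a := by rintro rfl; exact hv ha
  obtain ⟨T, hT, huvT, huaT, hvaT⟩ := hG.exists_triple (S := {i, j}) card_le_two hua hva (by tauto)
  have hpart := hf.part_add_le hG hcap hA hT ha (U := {u, v}) (by simp [*]) 0
  have := one_le_colorCliqueNum (c := c) (T := T) (card_pos.1 (hf.one_le_card 0))
  have := two_le_colorCliqueNum (A := {u, v}) hG (by simp) (by simp) huv huvT
  omega

theorem IsFourPartition.card_part_le_one (hG : IsGallai c)
    (hcap : ∀ T, #T = 3 → colorCliqueNum c T univ ≤ 5) (hA : IsColorModule c A)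
    (hf : IsFourPartition c A i j f) {u a : V} (hu : u ∉ A) (ha : a ∈ A)
    (h : c u a ∈ ({i, j} : Finset (Fin 5))) (m : Fin 4) : #{a ∈ A | f a = m} ≤ 1 := by
  by_contra! hcard
  obtain ⟨x, hx, y, hy, hxy⟩ := one_lt_card.1 hcard
  obtain ⟨T, hT⟩ := card_pos.1 (card_triples_insert_pos (c x y) (card_le_two (a := i) (b := j)))
  rw [triples_insert, mem_filter] at hT
  have huT : c u a ∈ T := (mem_triples.1 hT.1).1 h
  have hpart := hf.part_add_le hG hcap hA hT.1 ha (U := {u}) (by simp [*]) m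
  have := two_le_colorCliqueNum hG hx hy hxy hT.2
  have := one_le_colorCliqueNum (c := c) (T := T) (singleton_nonempty u)
  omega

theorem IsFourPartition.eq_univ_of_edge (hG : IsGallai c)
    (hcap : ∀ T, #T = 3 → colorCliqueNum c T univ ≤ 5) (hA : IsColorModule c A)
    (hf : IsFourPartition c A i j f) {m : Fin 4} {a b : V} (ha : a ∈ A ∧ f a = m)
    (hb : b ∈ A ∧ f b = m) (hab : a ≠ b) (h : c a b ∈ ({i, j} : Finset (Fin 5))) :
    A = univ ∧ #{a ∈ A | f a = m} ≤ 2 := by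
  have haA := ha.1
  replace ha : a ∈ ({a ∈ A | f a = m} : Finset V) := mem_filter.2 ha
  replace hb : b ∈ ({a ∈ A | f a = m} : Finset V) := mem_filter.2 hb
  refine ⟨eq_univ_of_forall fun u => ?_, ?_⟩
  · by_contra hu
    obtain ⟨T, hT⟩ := card_pos.1 (card_triples_insert_pos (c u a) (card_le_two (a := i) (b := j)))
    rw [triples_insert, mem_filter] at hT
    have hpart := hf.part_add_le hG hcap hA hT.1 haA (U := {u}) (by simp [*]) m
    have := two_le_colorCliqueNum hG ha hb hab ((mem_triples.1 hT.1).1 h)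
    have := one_le_colorCliqueNum (c := c) (T := T) (singleton_nonempty u)
    omega
  · by_contra! hcard
    obtain ⟨T, hT, hthree⟩ := exists_triple_three_le hG card_le_two hcard ha hb hab h
    have hpart := hf.part_add_le hG hcap hA hT haA (U := ∅) (by simp) m
    omega

theorem IsFourPartition.card_part_add_card_compl_le (hG : IsGallai c)
    (hcap : ∀ T, #T = 3 → colorCliqueNum c T univ ≤ 5) (hA : IsColorModule c A)
    (hf : IsFourPartition c A i j f) (m : Fin 4) : #{a ∈ A | f a = m} + #Aᶜ ≤ 5 := by
  have hdisj : Disjoint {a ∈ A | f a = m} Aᶜ :=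
    disjoint_of_subset_left (filter_subset _ _) disjoint_compl_right
  by_cases hsub : colorsOn c ({a ∈ A | f a = m} ∪ Aᶜ) ⊆ {i, j}ᶜ
  · rw [← card_union_of_disjoint hdisj]
    refine (card_le_colorCliqueNum (subset_univ _) hsub).trans (hcap _ ?_)
    rw [card_compl, card_pair hf.1, Fintype.card_fin]
  simp only [colorsOn_subset_iff, mem_compl, mem_union, mem_filter, not_forall, not_not] at hsub
  obtain ⟨u, hu, v, hv, huv, huvS⟩ := hsub
  have outside {u v : V} (hu : u ∉ A) (hv : v ∈ A) (huvS : c u v ∈ ({i, j} : Finset (Fin 5))) :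
      #{a ∈ A | f a = m} + #Aᶜ ≤ 5 := by
    have hcompl : #Aᶜ ≤ 1 := by
      by_contra! hcard
      obtain ⟨w, hw, hwu⟩ := exists_mem_ne hcard u
      exact (hf.notMem_of_outside_pair hG hcap hA hu (mem_compl.1 hw) hwu.symm hv).2 huvS
    have := hf.card_part_le_one hG hcap hA hu hv huvS m
    omega
  rcases hu with hu | hu <;> rcases hv with hv | hv
  · obtain ⟨rfl, hcard⟩ := hf.eq_univ_of_edge hG hcap hA hu hv huv huvS
    rw [compl_univ, card_empty]
    omega
  · exact outside hv hu.1 (hG.1 u v ▸ huvS)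
  · exact outside hu hv.1 huvS
  · obtain ⟨a, ha, -⟩ := hf.2.1 (Set.mem_univ 0)
    exact absurd huvS (hf.notMem_of_outside_pair hG hcap hA hu hv huv ha).1

theorem IsFourPartition.sum_weight_add_le (hG : IsGallai c)
    (hcap : ∀ T, #T = 3 → colorCliqueNum c T univ ≤ 5) (hA : IsColorModule c A)
    (hf : IsFourPartition c A i j f) :
    ∑ m, weight c {i, j} {a ∈ A | f a = m} + min 1 #Aᶜ ≤ 15 := by
  obtain ⟨a, ha, -⟩ := hf.2.1 (Set.mem_univ 0)
  have hle (T) (hT : T ∈ triples {i, j}) := hf.sum_add_le hG hcap hA hT ha (U := ∅) (by simp)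
  have hsum : ∑ m, weight c {i, j} {a ∈ A | f a = m} =
      ∑ T ∈ triples {i, j}, ∑ m, colorCliqueNum c T {a ∈ A | f a = m} := sum_comm
  have hfive : ∑ T ∈ triples {i, j}, 5 = 15 := by rw [sum_const, card_triples_pair i j hf.1]; rfl
  rcases Aᶜ.eq_empty_or_nonempty with hO | ⟨u, hu⟩
  · rw [hO, card_empty, hsum, ← hfive]
    exact sum_le_sum fun T hT => (Nat.le_add_right _ _).trans (hle T hT)
  · rw [min_eq_left (card_pos.2 ⟨u, hu⟩), hsum, ← hfive]
    refine sum_lt_sum (fun T hT => (Nat.le_add_right _ _).trans (hle T hT)) ?_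
    obtain ⟨T, hT⟩ := card_pos.1 (card_triples_insert_pos (c u a) (card_le_two (a := i) (b := j)))
    rw [triples_insert, mem_filter] at hT
    have := hf.sum_add_le hG hcap hA hT.1 ha (U := {u}) (by simpa using ⟨mem_compl.1 hu, hT.2⟩)
    have := one_le_colorCliqueNum (c := c) (T := T) (singleton_nonempty u)
    exact ⟨T, hT.1, by omega⟩

theorem IsFourPartition.card_le_nine (hG : IsGallai c)
    (hcap : ∀ T, #T = 3 → colorCliqueNum c T univ ≤ 5) (hA : IsColorModule c A)
    (hf : IsFourPartition c A i j f) : Fintype.card V ≤ 9 := by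
  have hcard : ∑ m, #{a ∈ A | f a = m} + #Aᶜ = Fintype.card V := by
    rw [← card_eq_sum_card_fiberwise (fun _ _ => mem_coe.2 (mem_univ _)), card_add_card_compl]
  have hsum := hf.sum_weight_add_le hG hcap hA
  have hpair : #({i, j} : Finset (Fin 5)) ≤ 2 := card_le_two
  have hpart (m : Fin 4) : 1 ≤ #{a ∈ A | f a = m} ∧ #{a ∈ A | f a = m} + #Aᶜ ≤ 5 ∧
      3 ≤ weight c {i, j} {a ∈ A | f a = m} ∧
      (2 ≤ #{a ∈ A | f a = m} → 4 ≤ weight c {i, j} {a ∈ A | f a = m}) ∧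
      (3 ≤ #{a ∈ A | f a = m} → 5 ≤ weight c {i, j} {a ∈ A | f a = m}) :=
    ⟨hf.one_le_card m, hf.card_part_add_card_compl_le hG hcap hA m,
      three_le_weight hpair (hf.one_le_card m), four_le_weight hG hpair, five_le_weight hG hpair⟩
  simp only [Fin.sum_univ_four] at hcard hsum
  have := hpart 0
  have := hpart 1
  have := hpart 2
  have := hpart 3
  omega

end FourPartition

section Decomposable

variable {V : Type*} [DecidableEq V] {c : V → V → Fin 5} {A : Finset V} {S : Finset (Fin 5)}

theorem Decomposable.two_le_colorCliqueNum (hG : IsGallai c) (hc : Decomposable c)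
    (hA : IsColorModule c A) (hcard : 4 ≤ #A) {T : Finset (Fin 5)} (hT : #T = 3) :
    2 ≤ colorCliqueNum c T A := by
  have hne : ¬ ∀ a ∈ A, ∀ b ∈ A, a ≠ b → c a b ∈ Tᶜ := by
    intro hsub
    obtain ⟨i, j, hij, hTij⟩ := card_eq_two.1 (show #Tᶜ = 2 by rw [card_compl, hT]; rfl)
    obtain ⟨g⟩ : Nonempty (Fin 4 ↪ A) := Function.Embedding.nonempty_of_card_le (by simpa)
    have hg : Function.Injective fun m => (g m : V) := Subtype.val_injective.comp g.injective
    have hsurj : Set.SurjOn (Function.invFun fun m => (g m : V)) A Set.univ :=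
      fun m _ => ⟨g m, (g m).2, Function.leftInverse_invFun hg m⟩
    refine hc A hA i j _ ⟨hij, hsurj, fun a ha b hb hab => ?_⟩
    have := hsub a ha b hb fun e => hab (congrArg _ e)
    rwa [hTij, mem_insert, mem_singleton] at this
  simp only [mem_compl, not_forall, not_not] at hne
  obtain ⟨a, ha, b, hb, hab, habT⟩ := hne
  exact _root_.two_le_colorCliqueNum hG ha hb hab habT

theorem Decomposable.min_le_weight (hG : IsGallai c) (hc : Decomposable c)
    (hA : IsColorModule c A) (hS : #S ≤ 2) (hpos : 1 ≤ #A) : min (#A + 2) 6 ≤ weight c S A := by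
  by_cases hfour : 4 ≤ #A
  · have hsum := card_nsmul_le_sum (triples S) (colorCliqueNum c · A) 2 fun T hT =>
      hc.two_le_colorCliqueNum hG hA hfour (mem_triples.1 hT).2
    have := three_le_card_triples S hS
    rw [smul_eq_mul] at hsum
    rw [weight]
    omega
  · have := three_le_weight (c := c) hS hpos
    have := four_le_weight (A := A) hG hS
    have := five_le_weight (A := A) hG hS
    omega

theorem Decomposable.fourteen_le_weight (hG : IsGallai c) (hc : Decomposable c)
    (hA : IsColorModule c A) (hcard : 4 ≤ #A) (x : Fin 5) : 14 ≤ weight c {x} A := by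
  have htwo {R : Finset (Finset (Fin 5))} (hR : R ⊆ triples {x}) :
      #R * 2 ≤ ∑ T ∈ R, colorCliqueNum c T A := by
    rw [← smul_eq_mul]
    exact card_nsmul_le_sum R _ 2 fun T hT =>
      hc.two_le_colorCliqueNum hG hA hcard (mem_triples.1 (hR hT)).2
  have hthree {a b : V} (ha : a ∈ A) (hb : b ∈ A) (hab : a ≠ b) :
      ∃ T ∈ triples {x}, c a b ∈ T ∧ 3 ≤ colorCliqueNum c T A := by
    obtain ⟨T, hT, h⟩ := exists_triple_three_le (S := {c a b, x}) hG card_le_two (by omega) ha hb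
      hab (mem_insert_self _ _)
    rw [triples_insert, mem_filter] at hT
    exact ⟨T, hT.1, hT.2, h⟩
  obtain ⟨a, ha, b, hb, hab⟩ := one_lt_card.1 (show 1 < #A by omega)
  obtain ⟨T, hT, -, hTA⟩ := hthree ha hb hab
  have hcardT : #((triples {x}).erase T) = 5 := by
    rw [card_erase_of_mem hT, card_triples_singleton]
  rw [weight, ← add_sum_erase _ _ hT]
  by_cases hsub : colorsOn c A ⊆ T
  · have := card_le_colorCliqueNum Subset.rfl hsub
    have := htwo (erase_subset T _)
    omega
  · simp only [colorsOn_subset_iff, not_forall] at hsub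
    obtain ⟨u, hu, v, hv, huv, huvT⟩ := hsub
    obtain ⟨T', hT', huvT', hTA'⟩ := hthree hu hv huv
    have hmem : T' ∈ (triples {x}).erase T :=
      mem_erase.2 ⟨fun e => huvT (e ▸ huvT'), hT'⟩
    have := htwo ((erase_subset T' _).trans (erase_subset T (triples {x})))
    rw [card_erase_of_mem hmem, hcardT] at this
    rw [← add_sum_erase _ _ hmem]
    omega

theorem Decomposable.min_add_weight_le (hG : IsGallai c) (hc : Decomposable c) {X Y : Finset V}
    {y : Fin 5} (h : MonoJoined c y X Y) (hX : IsColorModule c X) (hpos : 1 ≤ #X) (x : Fin 5) :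
    min (#X + 2) 6 + weight c {x} Y ≤ weight c {x} (X ∪ Y) :=
  (Nat.add_le_add_right (hc.min_le_weight hG hX card_le_two hpos) _).trans
    (weight_insert_add_weight_le hG h)

/-- A lower bound for the weight `weight c {x} A` of a module `A` with `n` vertices. The first five
values count small cliques directly, the others are chosen so that `singleBound_add_le` propagates
them along a monochromatic cut; the value `20` from `n = 8` on suffices for ten vertices. -/
def singleBound (n : ℕ) : ℕ :=
  [0, 6, 9, 12, 14, 16, 17, 19].getD n 20

theorem singleBound_le (n : ℕ) : singleBound n ≤ 20 := by
  rcases le_or_gt n 7 with h | h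
  · interval_cases n <;> decide
  · rw [singleBound, List.getD_eq_default _ _ h]

theorem singleBound_of_eight_le {n : ℕ} (h : 8 ≤ n) : singleBound n = 20 :=
  List.getD_eq_default _ _ h

theorem singleBound_add_le {m n : ℕ} (hm : 0 < m) (hmn : m ≤ n) (h : 5 ≤ m + n) :
    singleBound (m + n) ≤ max (min (m + 2) 6 + singleBound n) (singleBound m + min (n + 2) 6) := by
  rcases le_or_gt n 7 with hn | hn
  · interval_cases n <;> interval_cases m <;> first | omega | decide
  · have := singleBound_le (m + n)
    have := singleBound_of_eight_le hn
    omega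

theorem Decomposable.singleBound_le_weight (hG : IsGallai c) (hc : Decomposable c)
    (hA : IsColorModule c A) (x : Fin 5) : singleBound #A ≤ weight c {x} A := by
  induction hn : #A using Nat.strong_induction_on generalizing A with
  | _ n ih =>
  have hsix : #(triples {x}) = 6 := card_triples_singleton x
  have hpair (p : Fin 5) : 3 ≤ #(triples {p, x}) := three_le_card_triples _ card_le_two
  rcases le_or_gt n 4 with hle | hgt
  · interval_cases n
    · exact Nat.zero_le _
    · exact hsix.symm.le.trans (card_triples_le_weight (card_pos.1 (by omega)))
    · obtain ⟨p, hp⟩ := exists_card_triples_add_le_weight (S := {x}) hG hn.ge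
      have := hpair p
      change 9 ≤ _
      omega
    · obtain ⟨p, q, hpq⟩ := exists_card_triples_add_add_le_weight (S := {x}) hG hn.ge
      have := hpair p
      have := hpair q
      change 12 ≤ _
      omega
    · exact hc.fourteen_le_weight hG hA hn.ge x
  · obtain ⟨k, X, Y, hX, hY, hk, rfl, hpos, hle, hsum⟩ := hc.exists_joined hG hA (by omega)
    have := hc.min_add_weight_le hG hk hX hpos x
    have := hc.min_add_weight_le hG (hk.symm hG) hY (hpos.trans_le hle) x
    have := ih #X (by omega) hX rfl
    have := ih #Y (by omega) hY rfl
    have := singleBound_add_le hpos hle (by omega)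
    rw [hsum, hn] at this
    rw [union_comm Y X] at *
    omega

theorem Decomposable.singleBound_add_weight_le (hG : IsGallai c) (hc : Decomposable c)
    {X Y : Finset V} {x : Fin 5} (h : MonoJoined c x X Y) (hX : IsColorModule c X) :
    singleBound #X + weight c {x} Y ≤ weight c {x} (X ∪ Y) := by
  have hjoin := weight_insert_add_weight_le (S := {x}) hG h
  rw [insert_eq_of_mem (mem_singleton_self x)] at hjoin
  exact (Nat.add_le_add_right (hc.singleBound_le_weight hG hX x) _).trans hjoin

theorem false_of_singleBound_le {b a₁ a₂ d₁ d₂ : ℕ} (hb : 0 < b) (ha : 0 < a₁) (hd : 0 < d₁)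
    (hba : b ≤ a₁ + a₂) (haa : a₁ ≤ a₂) (hdd : d₁ ≤ d₂) (hsum : b + (a₁ + a₂) = 10)
    (hsum' : d₁ + d₂ = a₂)
    (h₁ : min (b + 2) 6 + (singleBound a₁ + singleBound a₂) ≤ 30)
    (h₂ : singleBound b + (min (a₁ + 2) 6 + singleBound a₂) ≤ 30)
    (h₃ : min (b + 2) 6 + (min (a₁ + 2) 6 + (singleBound d₁ + singleBound d₂)) ≤ 30)
    (h₄ : singleBound b + (min (a₁ + 2) 6 + (min (d₁ + 2) 6 + singleBound d₂)) ≤ 30) : False := by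
  obtain rfl : d₂ = 10 - b - a₁ - d₁ := by omega
  obtain rfl : a₂ = 10 - b - a₁ := by omega
  have : b ≤ 5 := by omega
  have : a₁ ≤ 4 := by omega
  have : d₁ ≤ 4 := by omega
  interval_cases b <;> interval_cases a₁ <;> interval_cases d₁ <;>
    simp [singleBound] at h₁ h₂ h₃ h₄ haa hdd

theorem weight_singleton_le [Fintype V] (hcap : ∀ T, #T = 3 → colorCliqueNum c T univ ≤ 5)
    (x : Fin 5) : weight c {x} univ ≤ 30 := by
  refine (sum_le_card_nsmul _ _ 5 fun T hT => hcap T (mem_triples.1 hT).2).trans ?_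
  rw [card_triples_singleton]
  rfl

theorem Decomposable.card_ne_ten [Fintype V] (hG : IsGallai c)
    (hcap : ∀ T, #T = 3 → colorCliqueNum c T univ ≤ 5) (hc : Decomposable c) :
    Fintype.card V ≠ 10 := by
  rw [← card_univ]
  intro hten
  obtain ⟨x, B, A, hB, hA, hx, hBA, hb, hba, hsum⟩ :=
    hc.exists_joined hG (A := univ) (fun z hz => absurd (mem_univ z) hz) (by omega)
  obtain ⟨y, A₁, A₂, hA₁, hA₂, hy, rfl, ha, haa, hsumA⟩ := hc.exists_joined hG hA (by omega)
  obtain ⟨z, D₁, D₂, hD₁, hD₂, hz, rfl, hd, hdd, hsumD⟩ := hc.exists_joined hG hA₂ (by omega)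
  have cap (k : Fin 5) : weight c {k} (B ∪ (A₁ ∪ (D₁ ∪ D₂))) ≤ 30 :=
    hBA ▸ weight_singleton_le hcap k
  have whole {X : Finset V} (hX : IsColorModule c X) (k : Fin 5) :=
    hc.singleBound_le_weight hG hX k
  have same {k : Fin 5} {X Y : Finset V} (h : MonoJoined c k X Y) (hX : IsColorModule c X) :=
    hc.singleBound_add_weight_le hG h hX
  have other {l : Fin 5} {X Y : Finset V} (h : MonoJoined c l X Y) (hX : IsColorModule c X)
      (hpos : 0 < #X) (k : Fin 5) := hc.min_add_weight_le hG h hX hpos k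
  refine false_of_singleBound_le hb ha hd (hba.trans hsumA.ge) haa hdd (by omega) hsumD
    ?_ ?_ ?_ ?_
  · linarith [other hx hB hb y, same hy hA₁, whole hA₂ y, cap y]
  · linarith [same hx hB, other hy hA₁ ha x, whole hA₂ x, cap x]
  · linarith [other hx hB hb z, other hy hA₁ ha z, same hz hD₁, whole hD₂ z, cap z]
  · linarith [same hx hB, other hy hA₁ ha x, other hz hD₁ hd x, whole hD₂ x, cap x]

end Decomposable

theorem IsGallai.exists_card_eq_six {V : Type*} [DecidableEq V] [Fintype V] {c : V → V → Fin 5}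
    (hG : IsGallai c) (hV : Fintype.card V = 10) :
    ∃ S : Finset V, #S = 6 ∧ #(colorsOn c S) ≤ 3 := by
  by_contra! h
  have hcap (T : Finset (Fin 5)) (hT : #T = 3) : colorCliqueNum c T univ ≤ 5 := by
    by_contra! hsix
    obtain ⟨S, -, hST, hS⟩ := exists_card_eq_colorCliqueNum c T univ
    obtain ⟨R, hRS, hR⟩ := exists_subset_card_eq (s := S) (n := 6) (by omega)
    have := h R hR
    have := card_le_card ((colorsOn_mono hRS).trans hST)
    omega
  by_cases hc : Decomposable c
  · exact hc.card_ne_ten hG hcap hV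
  · simp only [Decomposable, not_forall, not_not] at hc
    obtain ⟨A, hA, i, j, f, hf⟩ := hc
    have := hf.card_le_nine hG hcap hA
    omega

/-- A Gallai coloring of `K₉` without six vertices spanning at most three colors. Its blocks
`{0, 1, 2, 3}` and `{4, 5, 6, 7, 8}` are joined in color `4`; diagonal entries are irrelevant. -/
def nineColoring : Fin 9 → Fin 9 → Fin 5 :=
  ![![0, 0, 2, 2, 4, 4, 4, 4, 4],
    ![0, 0, 2, 2, 4, 4, 4, 4, 4],
    ![2, 2, 0, 1, 4, 4, 4, 4, 4],
    ![2, 2, 1, 0, 4, 4, 4, 4, 4],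
    ![4, 4, 4, 4, 0, 2, 3, 3, 3],
    ![4, 4, 4, 4, 2, 0, 3, 3, 3],
    ![4, 4, 4, 4, 3, 3, 0, 1, 1],
    ![4, 4, 4, 4, 3, 3, 1, 0, 0],
    ![4, 4, 4, 4, 3, 3, 1, 0, 0]]

theorem isGallai_nineColoring : IsGallai nineColoring := by
  unfold IsGallai
  decide +kernel

theorem four_le_card_colorsOn_nineColoring {S : Finset (Fin 9)} (hS : #S = 6) :
    4 ≤ #(colorsOn nineColoring S) := by
  have hall : ∀ S ∈ powersetCard 6 (univ : Finset (Fin 9)), 4 ≤ #(colorsOn nineColoring S) := by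
    decide +kernel
  exact hall S (mem_powersetCard.2 ⟨subset_univ S, hS⟩)

theorem gallaiNum_eq_succ {k q p n : ℕ}
    (hupper : ∀ c : Fin (n + 1) → Fin (n + 1) → Fin k, IsGallai c →
      ∃ S : Finset (Fin (n + 1)), #S = p ∧ #(colorsOn c S) ≤ q)
    {c : Fin n → Fin n → Fin k} (hG : IsGallai c)
    (hlower : ∀ S : Finset (Fin n), #S = p → q < #(colorsOn c S)) : gallaiNum k q p = n + 1 := by
  refine le_antisymm (Nat.sInf_le ⟨n.succ_pos, hupper⟩)
    (le_csInf ⟨n + 1, n.succ_pos, hupper⟩ ?_)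
  rintro m ⟨-, hm⟩
  by_contra! hmn
  let f : Fin m ↪ Fin n := Fin.castLEEmb (Nat.lt_succ_iff.1 hmn)
  obtain ⟨S, hS, hSq⟩ := hm _ (hG.comp f.injective)
  rw [colorsOn_comp] at hSq
  exact (hlower (S.map f) ((card_map f).trans hS)).not_ge hSq

theorem gallaiNum_five_three_six :
    gallaiNum 5 3 6 = 10 ∧
    (∀ c : Fin 10 → Fin 10 → Fin 5, IsGallai c →
      ∃ S : Finset (Fin 10), S.card = 6 ∧ (colorsOn c S).card ≤ 3) ∧
    (∃ c : Fin 9 → Fin 9 → Fin 5, IsGallai c ∧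
      ∀ S : Finset (Fin 9), S.card = 6 → 4 ≤ (colorsOn c S).card) := by
  have upper (c : Fin 10 → Fin 10 → Fin 5) (hG : IsGallai c) :=
    hG.exists_card_eq_six (Fintype.card_fin 10)
  have lower (S : Finset (Fin 9)) (hS : #S = 6) := four_le_card_colorsOn_nineColoring hS
  exact ⟨gallaiNum_eq_succ upper isGallai_nineColoring lower, upper,
    nineColoring, isGallai_nineColoring, lower⟩
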